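/- Markov move II (stabilization) property of the six-vertex Markov trace: the 8×8 matrix I₂ ⊗ R is invertible over K, and for every 4×4 matrix M over K one has Tr((h⊗h⊗h)·(M ⊗ I₂)·(I₂ ⊗ R)) = (1/(1+q))·Tr((h⊗h)·M) and Tr((h⊗h⊗h)·(M ⊗ I₂)·(I₂ ⊗ R)⁻¹) = (q/(1+q))·Tr((h⊗h)·M). In the notation of the Akutsu–Wadati construction, φ(A·Gₙ) = τ·φ(A) and φ(A·Gₙ⁻¹) = τ̄·φ(A) with τ = 1/(1+q) and τ̄ = q/(1+q). -/

import Mathlib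

open Matrix Kronecker

set_option synthInstance.maxHeartbeats 1000000
set_option maxHeartbeats 1000000

noncomputable section

/-- The ground field `K = ℚ(t)` of rational functions in one variable over `ℚ`. -/
abbrev K : Type := RatFunc ℚ

/-- The variable `t`, a square root of `q`. -/
def t : K := RatFunc.X

/-- `q = t²`. -/
def q : K := t ^ 2

/-- Kronecker product of square matrices, flattened with the lexicographic
(row-major) index ordering: the pair `(i, j)` corresponds to position `i * n + j`. -/
def kron {m n : ℕ} (A : Matrix (Fin m) (Fin m) K) (B : Matrix (Fin n) (Fin n) K) :
    Matrix (Fin (m * n)) (Fin (m * n)) K :=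
  Matrix.reindex finProdFinEquiv finProdFinEquiv (A ⊗ₖ B)

/-- The braided R-matrix of the two-state (six-vertex) model, with rows and columns
indexed by pairs `(i,j) ∈ {1,2}²` in the order `(1,1),(1,2),(2,1),(2,2)`;
here `-t` represents `-q^{1/2}`. -/
def R : Matrix (Fin 4) (Fin 4) K :=
  !![1,  0,  0,     0;
     0,  0,  -t,    0;
     0, -t,  1 - q, 0;
     0,  0,  0,     1]

/-- The weight matrix `h = (1/(1+q))·diag(1, q)`. -/
def h : Matrix (Fin 2) (Fin 2) K := (1 + q)⁻¹ • !![1, 0; 0, q]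

/-!
Tracing out the last strand turns `(g ⊗ h)(M ⊗ 1)(1 ⊗ X)` into `g M (1 ⊗ Y)`, where `Y` is the
partial trace of `(1 ⊗ h) X`. Stabilization by `X` therefore multiplies the weighted trace by `c` as
soon as `Y = c • 1`, for any weight `g` and any number of strands under `M`. For the R-matrix this
is a `2 × 2` computation, with `c = 1 / (1 + q)`. The quadratic relation `R² = (1 - q) R + q`
expresses `R⁻¹` through `R` and `1`, so that `tr h = 1` gives
`c = q⁻¹ (1 / (1 + q) - (1 - q)) = q / (1 + q)` for the inverse.
-/

section PartialTrace

variable {m n α : Type*} [Fintype n]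

/-- The partial trace over the second tensor factor. -/
def partialTrace [AddCommMonoid α] (A : Matrix (m × n) (m × n) α) : Matrix m m α :=
  of fun i j => ∑ k, A (i, k) (j, k)

lemma partialTrace_apply [AddCommMonoid α] (A : Matrix (m × n) (m × n) α) (i j : m) :
    partialTrace A i j = ∑ k, A (i, k) (j, k) := rfl

lemma trace_partialTrace [AddCommMonoid α] [Fintype m] (A : Matrix (m × n) (m × n) α) :
    trace (partialTrace A) = trace A :=
  (Fintype.sum_prod_type fun p => A p p).symm

lemma partialTrace_sub [AddCommGroup α] (A B : Matrix (m × n) (m × n) α) :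
    partialTrace (A - B) = partialTrace A - partialTrace B := by
  ext i j
  simp only [partialTrace_apply, Matrix.sub_apply, Finset.sum_sub_distrib]

lemma partialTrace_smul [Semiring α] (c : α) (A : Matrix (m × n) (m × n) α) :
    partialTrace (c • A) = c • partialTrace A := by
  ext i j
  simp only [partialTrace_apply, Matrix.smul_apply, Finset.smul_sum]

lemma partialTrace_kronecker [CommSemiring α] (A : Matrix m m α) (B : Matrix n n α) :
    partialTrace (A ⊗ₖ B) = trace B • A := by
  ext i j
  simp only [partialTrace_apply, kronecker_apply, ← Finset.mul_sum, Matrix.smul_apply, smul_eq_mul,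
    trace, diag_apply, mul_comm]

lemma partialTrace_kronecker_one_mul [Semiring α] [Fintype m] [DecidableEq n]
    (A : Matrix m m α) (X : Matrix (m × n) (m × n) α) :
    partialTrace ((A ⊗ₖ 1) * X) = A * partialTrace X := by
  ext i j
  simp only [partialTrace_apply, mul_apply, kronecker_apply, one_apply, Fintype.sum_prod_type,
    mul_ite, mul_one, mul_zero, ite_mul, zero_mul, Finset.sum_ite_eq, Finset.mem_univ, if_true,
    Finset.mul_sum]
  exact Finset.sum_comm

end PartialTrace

section OnLast

variable {m n α : Type*} [CommSemiring α] (l : Type*) [DecidableEq l]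

/-- The operator `1 ⊗ X` on a threefold tensor product, acting on the last two factors. The index
type is bracketed to the left, so that `M ⊗ 1` multiplies it. -/
def onLast (X : Matrix (m × n) (m × n) α) : Matrix ((l × m) × n) ((l × m) × n) α :=
  reindex (Equiv.prodAssoc l m n).symm (Equiv.prodAssoc l m n).symm (1 ⊗ₖ X)

lemma onLast_apply (X : Matrix (m × n) (m × n) α) (i j : (l × m) × n) :
    onLast l X i j = (1 : Matrix l l α) i.1.1 j.1.1 * X (i.1.2, i.2) (j.1.2, j.2) := rfl

lemma onLast_kronecker (A : Matrix m m α) (B : Matrix n n α) :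
    onLast l (A ⊗ₖ B) = (1 ⊗ₖ A) ⊗ₖ B :=
  (Equiv.symm_apply_eq _).mpr (kronecker_assoc 1 A B).symm

lemma onLast_mul [Fintype l] [Fintype m] [Fintype n] (X Y : Matrix (m × n) (m × n) α) :
    onLast l (X * Y) = onLast l X * onLast l Y := by
  simp only [onLast, reindex_apply, submatrix_mul_equiv, ← mul_kronecker_mul, mul_one]

lemma partialTrace_onLast [Fintype n] (X : Matrix (m × n) (m × n) α) :
    partialTrace (onLast l X) = 1 ⊗ₖ partialTrace X := by
  ext i j
  rw [kronecker_apply, partialTrace_apply, partialTrace_apply, Finset.mul_sum]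
  rfl

variable [Fintype l] [Fintype m] [DecidableEq m] [Fintype n] [DecidableEq n]

theorem trace_kronecker_mul_onLast {w : Matrix n n α} {X : Matrix (m × n) (m × n) α} {c : α}
    (hX : partialTrace ((1 ⊗ₖ w) * X) = c • (1 : Matrix m m α)) (g M : Matrix (l × m) (l × m) α) :
    trace ((g ⊗ₖ w) * ((M ⊗ₖ 1) * onLast l X)) = c * trace (g * M) := by
  have split_weight : (g ⊗ₖ w) * ((M ⊗ₖ 1) * onLast l X) =
      ((g * M) ⊗ₖ 1) * onLast l ((1 ⊗ₖ w) * X) := by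
    rw [onLast_mul, onLast_kronecker, one_kronecker_one, ← Matrix.mul_assoc, ← Matrix.mul_assoc,
      ← mul_kronecker_mul, ← mul_kronecker_mul, mul_one, mul_one, one_mul]
  rw [split_weight, ← trace_partialTrace, partialTrace_kronecker_one_mul, partialTrace_onLast, hX,
    kronecker_smul, one_kronecker_one, mul_smul_one, trace_smul, smul_eq_mul]

end OnLast

section OnLastInverse

variable {l m n α : Type*} [CommRing α] [Fintype l] [DecidableEq l] [Fintype m] [DecidableEq m]
  [Fintype n] [DecidableEq n]

lemma isUnit_onLast {X : Matrix (m × n) (m × n) α} (hX : IsUnit X) : IsUnit (onLast l X) :=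
  (isUnit_submatrix_equiv _ _).mpr (IsUnit.kronecker isUnit_one hX)

lemma inv_onLast (X : Matrix (m × n) (m × n) α) : (onLast l X)⁻¹ = onLast l X⁻¹ := by
  rw [onLast, inv_reindex, inv_kronecker, inv_one, onLast]

end OnLastInverse

lemma mul_inv_smul_sub_eq_one_of_mul_self_eq {F A : Type*} [Field F] [Ring A] [Algebra F A] {x : A}
    {a b : F} (hb : b ≠ 0) (hx : x * x = a • x + b • 1) : x * (b⁻¹ • (x - a • 1)) = 1 := by
  rw [mul_smul_comm, mul_sub, mul_smul_one, hx, add_sub_cancel_left, inv_smul_smul₀ hb]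

section SixVertex

variable {F : Type*} [Field F]

/-- The braided R-matrix of the six-vertex model over any field, with parameter `s` in the role of
`q^{1/2}` and with rows and columns indexed by pairs of states. -/
def sixVertexR (s : F) : Matrix (Fin 2 × Fin 2) (Fin 2 × Fin 2) F :=
  reindex finProdFinEquiv.symm finProdFinEquiv.symm
    !![1, 0, 0, 0; 0, 0, -s, 0; 0, -s, 1 - s ^ 2, 0; 0, 0, 0, 1]

/-- The weight matrix `h` of the six-vertex model over any field, with `q = s²`. -/
def sixVertexWeight (s : F) : Matrix (Fin 2) (Fin 2) F := (1 + s ^ 2)⁻¹ • !![1, 0; 0, s ^ 2]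

lemma sixVertexR_mul_self (s : F) :
    sixVertexR s * sixVertexR s = (1 - s ^ 2) • sixVertexR s + s ^ 2 • 1 := by
  rw [← (reindex finProdFinEquiv finProdFinEquiv).injective.eq_iff]
  ext i j
  fin_cases i <;> fin_cases j <;>
    simp [sixVertexR, mul_apply, Fintype.sum_prod_type, finProdFinEquiv, Fin.divNat, Fin.modNat,
      one_apply] <;>
    ring

lemma sixVertexR_mul_inv_smul_sub {s : F} (hs : s ≠ 0) :
    sixVertexR s * ((s ^ 2)⁻¹ • (sixVertexR s - (1 - s ^ 2) • 1)) = 1 :=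
  mul_inv_smul_sub_eq_one_of_mul_self_eq (pow_ne_zero 2 hs) (sixVertexR_mul_self s)

lemma isUnit_sixVertexR {s : F} (hs : s ≠ 0) : IsUnit (sixVertexR s) :=
  .of_mul_eq_one _ (sixVertexR_mul_inv_smul_sub hs)

lemma inv_sixVertexR {s : F} (hs : s ≠ 0) :
    (sixVertexR s)⁻¹ = (s ^ 2)⁻¹ • (sixVertexR s - (1 - s ^ 2) • 1) :=
  inv_eq_right_inv (sixVertexR_mul_inv_smul_sub hs)

lemma trace_sixVertexWeight {s : F} (hs : 1 + s ^ 2 ≠ 0) : trace (sixVertexWeight s) = 1 := by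
  rw [sixVertexWeight, trace_smul, trace_fin_two_of, smul_eq_mul, inv_mul_cancel₀ hs]

lemma partialTrace_weight_mul_sixVertexR (s : F) :
    partialTrace ((1 ⊗ₖ sixVertexWeight s) * sixVertexR s) =
      (1 + s ^ 2)⁻¹ • (1 : Matrix (Fin 2) (Fin 2) F) := by
  ext i j
  fin_cases i <;> fin_cases j <;>
    simp [sixVertexR, sixVertexWeight, partialTrace_apply, mul_apply, Fintype.sum_prod_type,
      finProdFinEquiv, one_apply]
  ring

lemma partialTrace_weight_mul_inv_sixVertexR {s : F} (hs : s ≠ 0) (hs' : 1 + s ^ 2 ≠ 0) :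
    partialTrace ((1 ⊗ₖ sixVertexWeight s) * (sixVertexR s)⁻¹) =
      (s ^ 2 / (1 + s ^ 2)) • (1 : Matrix (Fin 2) (Fin 2) F) := by
  have scalar_eq : (s ^ 2)⁻¹ * ((1 + s ^ 2)⁻¹ - (1 - s ^ 2)) = s ^ 2 / (1 + s ^ 2) := by
    field_simp
    ring
  rw [inv_sixVertexR hs, Matrix.mul_smul, mul_sub, Matrix.mul_smul, mul_one, partialTrace_smul,
    partialTrace_sub, partialTrace_smul, partialTrace_weight_mul_sixVertexR, partialTrace_kronecker,
    trace_sixVertexWeight hs', one_smul, ← sub_smul, smul_smul, scalar_eq]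

theorem markov_move_II_six_vertex_general {s : F} (hs : s ≠ 0) (hs' : 1 + s ^ 2 ≠ 0) (l : Type*)
    [Fintype l] [DecidableEq l] :
    IsUnit (onLast l (sixVertexR s)) ∧
    ∀ g M : Matrix (l × Fin 2) (l × Fin 2) F,
      trace ((g ⊗ₖ sixVertexWeight s) * ((M ⊗ₖ 1) * onLast l (sixVertexR s))) =
        (1 + s ^ 2)⁻¹ * trace (g * M) ∧
      trace ((g ⊗ₖ sixVertexWeight s) * ((M ⊗ₖ 1) * (onLast l (sixVertexR s))⁻¹)) =
        (s ^ 2 / (1 + s ^ 2)) * trace (g * M) := by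
  refine ⟨isUnit_onLast (isUnit_sixVertexR hs), fun g M => ⟨?_, ?_⟩⟩
  · exact trace_kronecker_mul_onLast l (partialTrace_weight_mul_sixVertexR s) g M
  · rw [inv_onLast]
    exact trace_kronecker_mul_onLast l (partialTrace_weight_mul_inv_sixVertexR hs hs') g M

end SixVertex

lemma trace_reindex {m n α : Type*} [Fintype m] [Fintype n] [AddCommMonoid α] (e : m ≃ n)
    (A : Matrix m m α) : trace (reindex e e A) = trace A :=
  Equiv.sum_comp e.symm fun i => A i i

lemma reindex_mul_reindex {m n α : Type*} [Fintype m] [Fintype n] [NonUnitalNonAssocSemiring α]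
    (e : m ≃ n) (A B : Matrix m m α) : reindex e e A * reindex e e B = reindex e e (A * B) :=
  submatrix_mul_equiv A B _ _ _

section Flatten

variable {m n p : ℕ}

/-- The lexicographic ordering of the index triples of a threefold tensor product. -/
def flattenTriple (m n p : ℕ) : (Fin m × Fin n) × Fin p ≃ Fin (m * n * p) :=
  (finProdFinEquiv.prodCongr (Equiv.refl _)).trans finProdFinEquiv

lemma finCongr_flattenTriple (i : (Fin m × Fin n) × Fin p) :
    finCongr (mul_assoc m n p) (flattenTriple m n p i) =
      finProdFinEquiv (i.1.1, finProdFinEquiv (i.1.2, i.2)) := by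
  ext
  simp only [flattenTriple, Equiv.trans_apply, Equiv.prodCongr_apply, Equiv.coe_refl, Prod.map,
    id, finCongr_apply, Fin.val_cast, finProdFinEquiv_apply_val]
  ring

lemma kron_apply_finProdFinEquiv (A : Matrix (Fin m) (Fin m) K) (B : Matrix (Fin n) (Fin n) K)
    (i j : Fin m × Fin n) :
    kron A B (finProdFinEquiv i) (finProdFinEquiv j) = A i.1 j.1 * B i.2 j.2 := by
  simp only [kron, reindex_apply, submatrix_apply, Equiv.symm_apply_apply, kroneckerMap_apply]

lemma kron_eq_reindex_flattenTriple (A : Matrix (Fin (m * n)) (Fin (m * n)) K)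
    (B : Matrix (Fin p) (Fin p) K) :
    kron A B = reindex (flattenTriple m n p) (flattenTriple m n p)
      (reindex finProdFinEquiv.symm finProdFinEquiv.symm A ⊗ₖ B) := by
  refine (Equiv.symm_apply_eq (reindex (flattenTriple m n p) (flattenTriple m n p))).mp ?_
  ext i j
  exact kron_apply_finProdFinEquiv A B _ _

lemma kron_one_reindex_eq_reindex_onLast (X : Matrix (Fin n × Fin p) (Fin n × Fin p) K) :
    reindex (finCongr (mul_assoc m n p).symm) (finCongr (mul_assoc m n p).symm)
        (kron (1 : Matrix (Fin m) (Fin m) K) (reindex finProdFinEquiv finProdFinEquiv X)) =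
      reindex (flattenTriple m n p) (flattenTriple m n p) (onLast (Fin m) X) := by
  refine (Equiv.symm_apply_eq (reindex (flattenTriple m n p) (flattenTriple m n p))).mp ?_
  ext i j
  simp only [reindex_symm, reindex_apply, submatrix_apply, Equiv.symm_symm, finCongr_symm,
    finCongr_flattenTriple, kron_apply_finProdFinEquiv, Equiv.symm_apply_apply, onLast_apply]

lemma trace_kron_mul_kron_one_mul_reindex {w : Matrix (Fin p) (Fin p) K}
    {X : Matrix ((Fin m × Fin n) × Fin p) ((Fin m × Fin n) × Fin p) K} {c : K}
    (hX : ∀ g M : Matrix (Fin m × Fin n) (Fin m × Fin n) K,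
      trace ((g ⊗ₖ w) * ((M ⊗ₖ 1) * X)) = c * trace (g * M))
    (G M : Matrix (Fin (m * n)) (Fin (m * n)) K) :
    trace (kron G w * (kron M 1 * reindex (flattenTriple m n p) (flattenTriple m n p) X)) =
      c * trace (G * M) := by
  rw [kron_eq_reindex_flattenTriple, kron_eq_reindex_flattenTriple, reindex_mul_reindex,
    reindex_mul_reindex, trace_reindex, hX, reindex_mul_reindex, trace_reindex]

end Flatten

lemma R_eq_reindex_sixVertexR : R = reindex finProdFinEquiv finProdFinEquiv (sixVertexR t) :=
  (Equiv.symm_apply_eq _).mp rfl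

lemma kron_one_R_eq_reindex_onLast :
    kron (1 : Matrix (Fin 2) (Fin 2) K) R =
      reindex (flattenTriple 2 2 2) (flattenTriple 2 2 2) (onLast (Fin 2) (sixVertexR t)) := by
  rw [R_eq_reindex_sixVertexR]
  exact kron_one_reindex_eq_reindex_onLast (m := 2) (sixVertexR t)

lemma t_ne_zero : t ≠ 0 := RatFunc.X_ne_zero

lemma one_add_t_sq_ne_zero : 1 + t ^ 2 ≠ 0 := by
  have hp : (1 + Polynomial.X ^ 2 : Polynomial ℚ) ≠ 0 := fun e => by
    simpa using congrArg (Polynomial.eval 0) e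
  simpa [t] using RatFunc.algebraMap_ne_zero hp

/-- Markov move II (stabilization) property of the six-vertex Markov
trace: the 8×8 matrix `I₂ ⊗ R` is invertible over `K`, and for every 4×4 matrix `M`
over `K` one has `Tr((h⊗h⊗h)·(M ⊗ I₂)·(I₂ ⊗ R)) = (1/(1+q))·Tr((h⊗h)·M)` and
`Tr((h⊗h⊗h)·(M ⊗ I₂)·(I₂ ⊗ R)⁻¹) = (q/(1+q))·Tr((h⊗h)·M)`; i.e.
`φ(A·Gₙ) = τ·φ(A)` and `φ(A·Gₙ⁻¹) = τ̄·φ(A)` with `τ = 1/(1+q)`, `τ̄ = q/(1+q)`. -/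
theorem markov_move_II_six_vertex :
    IsUnit (kron (1 : Matrix (Fin 2) (Fin 2) K) R) ∧
    ∀ M : Matrix (Fin 4) (Fin 4) K,
      Matrix.trace (kron (kron h h) h * (kron M (1 : Matrix (Fin 2) (Fin 2) K) *
          kron (1 : Matrix (Fin 2) (Fin 2) K) R)) =
        (1 + q)⁻¹ * Matrix.trace (kron h h * M) ∧
      Matrix.trace (kron (kron h h) h * (kron M (1 : Matrix (Fin 2) (Fin 2) K) *
          (kron (1 : Matrix (Fin 2) (Fin 2) K) R)⁻¹)) =
        (q / (1 + q)) * Matrix.trace (kron h h * M) := by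
  obtain ⟨isUnit_onLast_R, stabilize⟩ :=
    markov_move_II_six_vertex_general t_ne_zero one_add_t_sq_ne_zero (Fin 2)
  rw [kron_one_R_eq_reindex_onLast, inv_reindex]
  exact ⟨(isUnit_submatrix_equiv _ _).mpr isUnit_onLast_R, fun M =>
    ⟨trace_kron_mul_kron_one_mul_reindex (fun g M => (stabilize g M).1) (kron h h) M,
      trace_kron_mul_kron_one_mul_reindex (fun g M => (stabilize g M).2) (kron h h) M⟩⟩
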